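/- Let p₀ ∈ ℝ² ∖ {(0,0)}, set c := ½(λ₁ (p₀¹)² + λ₂ (p₀²)²) and A := 2πc/√(λ₁λ₂) (the Euclidean area enclosed by the ellipse { p ∈ ℝ² : ½(λ₁ p₁² + λ₂ p₂²) = c }, which passes through p₀). Then every closed locally Lipschitz curve γ : [a,b] → ℝ² with γ(a) = γ(b) = p₀ and 𝒜(γ) = A satisfies E_H(γ) ≥ (λ₁ + λ₂) A, and any positively oriented locally Lipschitz parametrization of the ellipse attains equality; that is, the ellipse minimizes E_H among all closed curves through p₀ enclosing Euclidean area A, and the minimal value equals (λ₁ + λ₂) A. -/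

import Mathlib

open MeasureTheory Set Filter Topology
open scoped ENNReal

noncomputable section

/-- The Euclidean norm of a vector in `ℝ × ℝ`. -/
def enorm2 (v : ℝ × ℝ) : ℝ := Real.sqrt (v.1 ^ 2 + v.2 ^ 2)

/-- The degenerate length `E(γ) = ∫ₐᵇ F(γ(t)) |γ'(t)| dt` of a planar curve. -/
def degLen (F : ℝ × ℝ → ℝ) (a b : ℝ) (γ : ℝ → ℝ × ℝ) : ℝ :=
  ∫ t in a..b, F (γ t) * enorm2 (deriv γ t)

/-- The signed area `𝒜(γ) = ∫ₐᵇ γ¹(t) (γ²)'(t) dt` of a planar curve. -/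
def sArea (a b : ℝ) (γ : ℝ → ℝ × ℝ) : ℝ :=
  ∫ t in a..b, (γ t).1 * deriv (fun s => (γ s).2) t

/-- A locally Lipschitz curve on `[a,b]` joining `p` to `q`. -/
def IsCurve (a b : ℝ) (γ : ℝ → ℝ × ℝ) (p q : ℝ × ℝ) : Prop :=
  a ≤ b ∧ LocallyLipschitz γ ∧ γ a = p ∧ γ b = q

/-- The homogeneous conformal factor `F_H(p) = √(λ₁²p₁² + λ₂²p₂²)`. -/
def FH (l1 l2 : ℝ) (p : ℝ × ℝ) : ℝ := Real.sqrt (l1 ^ 2 * p.1 ^ 2 + l2 ^ 2 * p.2 ^ 2)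

theorem ac_lip_comp {f : ℝ → ℝ} {φ : ℝ → ℝ} {a b : ℝ}
    (hf : AbsolutelyContinuousOnInterval f a b) (hφ : LipschitzWith 1 φ) :
    AbsolutelyContinuousOnInterval (fun t => φ (f t)) a b := by
  apply squeeze_zero (fun t ↦ ?_) (fun t ↦ ?_) hf
  · exact Finset.sum_nonneg (fun i hi ↦ by positivity)
  · gcongr
    simpa using hφ.dist_le_mul _ _

theorem curve_ac {a b : ℝ} {γ : ℝ → ℝ × ℝ} (h : LocallyLipschitz γ) :
    AbsolutelyContinuousOnInterval (fun t => (γ t).1) a b ∧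
    AbsolutelyContinuousOnInterval (fun t => (γ t).2) a b := by
  have h1 : LocallyLipschitz (fun t => (γ t).1) := LipschitzWith.prod_fst.locallyLipschitz.comp h
  have h2 : LocallyLipschitz (fun t => (γ t).2) := LipschitzWith.prod_snd.locallyLipschitz.comp h
  obtain ⟨K1, hK1⟩ := (h1.locallyLipschitzOn (s := uIcc a b)).exists_lipschitzOnWith_of_compact
    isCompact_uIcc
  obtain ⟨K2, hK2⟩ := (h2.locallyLipschitzOn (s := uIcc a b)).exists_lipschitzOnWith_of_compact
    isCompact_uIcc
  exact ⟨hK1.absolutelyContinuousOnInterval, hK2.absolutelyContinuousOnInterval⟩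

theorem deriv_pair {γ : ℝ → ℝ × ℝ} {t : ℝ} (h1 : DifferentiableAt ℝ (fun s => (γ s).1) t)
    (h2 : DifferentiableAt ℝ (fun s => (γ s).2) t) :
    deriv γ t = (deriv (fun s => (γ s).1) t, deriv (fun s => (γ s).2) t) :=
  (h1.hasDerivAt.prodMk h2.hasDerivAt).deriv

theorem alg_le (l1 l2 x y x' y' : ℝ) :
    l1 * (x * y') - l2 * (x' * y) ≤ FH l1 l2 (x, y) * enorm2 (x', y') := by
  unfold FH enorm2
  rw [← Real.sqrt_mul (by positivity)]
  apply Real.le_sqrt_of_sq_le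
  simp only
  nlinarith [sq_nonneg (l1 * x * x' + l2 * y * y')]

theorem alg_eq (l1 l2 x y x' y' : ℝ) (h : l1 * x * x' + l2 * y * y' = 0)
    (hp : 0 ≤ l1 * (x * y') - l2 * (x' * y)) :
    FH l1 l2 (x, y) * enorm2 (x', y') = l1 * (x * y') - l2 * (x' * y) := by
  unfold FH enorm2
  rw [← Real.sqrt_mul (by positivity), ← Real.sqrt_sq hp]
  congr 1
  simp only
  linear_combination (l1 * x * x' + l2 * y * y') * h

section
variable {a b : ℝ} {γ : ℝ → ℝ × ℝ}

theorem int_ii (hL : LocallyLipschitz γ) :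
    IntervalIntegrable (fun t => (γ t).1 * deriv (fun s => (γ s).2) t) volume a b ∧
    IntervalIntegrable (fun t => deriv (fun s => (γ s).1) t * (γ t).2) volume a b := by
  obtain ⟨h1, h2⟩ := curve_ac (a := a) (b := b) hL
  exact ⟨h2.intervalIntegrable_deriv.continuousOn_mul h1.continuousOn,
    h1.intervalIntegrable_deriv.mul_continuousOn h2.continuousOn⟩

theorem int_lin (hL : LocallyLipschitz γ) (hcl : γ a = γ b) (l1 l2 : ℝ) :
    IntervalIntegrable (fun t => l1 * ((γ t).1 * deriv (fun s => (γ s).2) t)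
      - l2 * (deriv (fun s => (γ s).1) t * (γ t).2)) volume a b ∧
    ∫ t in a..b, (l1 * ((γ t).1 * deriv (fun s => (γ s).2) t)
      - l2 * (deriv (fun s => (γ s).1) t * (γ t).2)) = (l1 + l2) * sArea a b γ := by
  obtain ⟨h1, h2⟩ := curve_ac (a := a) (b := b) hL
  obtain ⟨i1, i2⟩ := int_ii (a := a) (b := b) hL
  refine ⟨(i1.const_mul l1).sub (i2.const_mul l2), ?_⟩
  rw [intervalIntegral.integral_sub (i1.const_mul l1) (i2.const_mul l2),
    intervalIntegral.integral_const_mul, intervalIntegral.integral_const_mul]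
  have := h1.integral_mul_deriv_eq_deriv_mul h2
  rw [hcl] at this
  unfold sArea
  linear_combination (-l2) * this

theorem int_deg (hL : LocallyLipschitz γ) (l1 l2 : ℝ) :
    IntervalIntegrable (fun t => FH l1 l2 (γ t) * enorm2 (deriv γ t)) volume a b := by
  obtain ⟨h1, h2⟩ := curve_ac (a := a) (b := b) hL
  have hF : Continuous (fun t => FH l1 l2 (γ t)) := by
    have := hL.continuous
    unfold FH
    fun_prop
  apply IntervalIntegrable.continuousOn_mul _ hF.continuousOn
  refine (h1.intervalIntegrable_deriv.abs.add h2.intervalIntegrable_deriv.abs).mono_fun ?_ ?_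
  · have : Measurable (deriv γ) := measurable_deriv γ
    unfold enorm2
    exact (by fun_prop : Measurable _).aestronglyMeasurable
  · have e1 := h1.ae_differentiableAt
    have e2 := h2.ae_differentiableAt
    rw [EventuallyLE, ae_restrict_iff' measurableSet_uIoc]
    filter_upwards [e1, e2] with t ht1 ht2 ht
    have ht := uIoc_subset_uIcc ht
    rw [deriv_pair (ht1 ht) (ht2 ht)]
    unfold enorm2
    rw [Real.norm_of_nonneg (Real.sqrt_nonneg _)]
    simp only
    rw [Real.norm_of_nonneg (by positivity)]
    apply Real.sqrt_le_iff.2 ⟨by positivity, ?_⟩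
    nlinarith [sq_abs (deriv (fun s => (γ s).1) t), sq_abs (deriv (fun s => (γ s).2) t),
      abs_nonneg (deriv (fun s => (γ s).1) t), abs_nonneg (deriv (fun s => (γ s).2) t),
      mul_nonneg (abs_nonneg (deriv (fun s => (γ s).1) t)) (abs_nonneg (deriv (fun s => (γ s).2) t))]

theorem part_one (hab : a ≤ b) (hL : LocallyLipschitz γ) (hcl : γ a = γ b) (l1 l2 : ℝ) :
    (l1 + l2) * sArea a b γ ≤ degLen (FH l1 l2) a b γ := by
  obtain ⟨h1, h2⟩ := curve_ac (a := a) (b := b) hL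
  obtain ⟨i1, e1⟩ := int_lin hL hcl l1 l2
  rw [← e1]
  apply intervalIntegral.integral_mono_ae_restrict hab i1 (int_deg hL l1 l2)
  rw [EventuallyLE, ae_restrict_iff' measurableSet_Icc]
  filter_upwards [h1.ae_differentiableAt, h2.ae_differentiableAt] with t ht1 ht2 ht
  rw [uIcc_of_le hab] at ht1 ht2
  rw [deriv_pair (ht1 ht) (ht2 ht)]
  exact alg_le _ _ _ _ _ _

theorem part_two (hab : a < b) (hL : LocallyLipschitz γ) (hcl : γ a = γ b) {l1 l2 c : ℝ}
    (hl1 : 0 < l1) (hl2 : 0 < l2) (hc : 0 < c) (hpos : 0 < sArea a b γ)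
    (hinj : InjOn γ (Ico a b))
    (hE : ∀ t ∈ Icc a b, l1 * (γ t).1 ^ 2 + l2 * (γ t).2 ^ 2 = 2 * c) :
    degLen (FH l1 l2) a b γ = (l1 + l2) * sArea a b γ := by
  obtain ⟨h1, h2⟩ := curve_ac (a := a) (b := b) hL
  obtain ⟨s1, hs1, hs1'⟩ : ∃ s, 0 < s ∧ s ^ 2 = l1 :=
    ⟨√l1, Real.sqrt_pos.2 hl1, Real.sq_sqrt hl1.le⟩
  obtain ⟨s2, hs2, hs2'⟩ : ∃ s, 0 < s ∧ s ^ 2 = l2 :=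
    ⟨√l2, Real.sqrt_pos.2 hl2, Real.sq_sqrt hl2.le⟩
  set x : ℝ → ℝ := fun t => (γ t).1 with hx
  set y : ℝ → ℝ := fun t => (γ t).2 with hy
  set κ : ℝ := s1 * s2 / (2 * c) with hκ
  have hκp : 0 < κ := by positivity
  set w : ℝ → ℝ := fun t => κ * (x t * deriv y t) - κ * (deriv x t * y t) with hw
  obtain ⟨iw, ew⟩ := int_lin (a := a) (b := b) hL hcl κ κ
  change IntervalIntegrable w volume a b at iw
  change ∫ t in a..b, w t = _ at ew
  set ω : ℝ → ℝ := fun t => ∫ v in a..t, w v with hω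
  have acω : AbsolutelyContinuousOnInterval ω a b :=
    iw.absolutelyContinuousOnInterval_intervalIntegral (by simp)
  have acc : AbsolutelyContinuousOnInterval (fun t => Real.cos (ω t)) a b :=
    ac_lip_comp acω Real.lipschitzWith_cos
  have acs : AbsolutelyContinuousOnInterval (fun t => Real.sin (ω t)) a b :=
    ac_lip_comp acω Real.lipschitzWith_sin
  have hne : ∀ z : ℝ, ∀ᵐ t : ℝ, t ≠ z := fun z => by simp [ae_iff, measure_singleton]
  -- everything that holds almost everywhere
  have key : ∀ᵐ t, t ∈ uIcc a b → t ∈ Ioo a b ∧ DifferentiableAt ℝ x t ∧ DifferentiableAt ℝ y t ∧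
      HasDerivAt ω (w t) t ∧ l1 * x t * deriv x t + l2 * y t * deriv y t = 0 := by
    filter_upwards [h1.ae_differentiableAt, h2.ae_differentiableAt, iw.ae_hasDerivAt_integral,
      hne a, hne b] with t t1 t2 t3 ta tb ht
    have ht' : t ∈ Ioo a b := by
      rw [uIcc_of_le hab.le] at ht
      exact ⟨lt_of_le_of_ne ht.1 (Ne.symm ta), lt_of_le_of_ne ht.2 tb⟩
    refine ⟨ht', t1 ht, t2 ht, t3 ht a (by simp), ?_⟩
    have d := (((t1 ht).hasDerivAt.pow 2).const_mul l1).add (((t2 ht).hasDerivAt.pow 2).const_mul l2)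
    have d0 : HasDerivAt (fun _ : ℝ => 2 * c) 0 t := hasDerivAt_const _ _
    have ev : (fun _ : ℝ => 2 * c) =ᶠ[𝓝 t] (fun t => l1 * x t ^ 2 + l2 * y t ^ 2) := by
      filter_upwards [Icc_mem_nhds ht'.1 ht'.2] with r hr
      exact (hE r hr).symm
    have := d.unique (d0.congr_of_eventuallyEq ev.symm)
    norm_num at this
    linear_combination this / 2
  have fac := ((h1.const_mul s1).fun_mul acc).fun_add ((h2.const_mul s2).fun_mul acs)
  have gac := ((h2.const_mul s2).fun_mul acc).fun_sub ((h1.const_mul s1).fun_mul acs)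
  have rel : ∀ t ∈ Ioo a b, l1 * x t * deriv x t + l2 * y t * deriv y t = 0 →
      s1 * deriv x t + s2 * y t * w t = 0 ∧ s2 * deriv y t - s1 * x t * w t = 0 := by
    intro t ht h0
    have hEt := hE t ⟨ht.1.le, ht.2.le⟩
    change l1 * x t ^ 2 + l2 * y t ^ 2 = 2 * c at hEt
    have hw' : w t * (2 * c) = s1 * s2 * (x t * deriv y t - deriv x t * y t) := by
      simp only [hw, hκ]; field_simp
    rw [← hs1', ← hs2'] at h0 hEt
    have hc2 : (2 * c) ≠ 0 := by positivity
    constructor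
    · apply (mul_left_inj' hc2).1
      linear_combination s2 * y t * hw' - s1 * deriv x t * hEt + s1 * x t * h0
    · apply (mul_left_inj' hc2).1
      linear_combination (-s1 * x t) * hw' - s2 * deriv y t * hEt + s2 * y t * h0
  obtain ⟨C, hC⟩ := fac.const_of_ae_hasDerivAt_zero (by
    filter_upwards [key] with t ht hm
    obtain ⟨hI, d1, d2, d3, d4⟩ := ht hm
    obtain ⟨r1, r2⟩ := rel t hI d4
    have := ((d1.hasDerivAt.const_mul s1).mul d3.cos).add ((d2.hasDerivAt.const_mul s2).mul d3.sin)
    refine HasDerivAt.congr_deriv this ?_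
    linear_combination Real.cos (ω t) * r1 + Real.sin (ω t) * r2)
  obtain ⟨D, hD⟩ := gac.const_of_ae_hasDerivAt_zero (by
    filter_upwards [key] with t ht hm
    obtain ⟨hI, d1, d2, d3, d4⟩ := ht hm
    obtain ⟨r1, r2⟩ := rel t hI d4
    have := ((d2.hasDerivAt.const_mul s2).mul d3.cos).sub ((d1.hasDerivAt.const_mul s1).mul d3.sin)
    refine HasDerivAt.congr_deriv this ?_
    linear_combination Real.cos (ω t) * r2 - Real.sin (ω t) * r1)
  rw [uIcc_of_le hab.le] at hC hD
  have recx : ∀ t ∈ Icc a b, s1 * x t = C * Real.cos (ω t) - D * Real.sin (ω t) := by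
    intro t ht
    linear_combination Real.cos (ω t) * hC t ht - Real.sin (ω t) * hD t ht
      - s1 * x t * Real.sin_sq_add_cos_sq (ω t)
  have recy : ∀ t ∈ Icc a b, s2 * y t = C * Real.sin (ω t) + D * Real.cos (ω t) := by
    intro t ht
    linear_combination Real.sin (ω t) * hC t ht + Real.cos (ω t) * hD t ht
      - s2 * y t * Real.sin_sq_add_cos_sq (ω t)
  have hγeq : ∀ t ∈ Icc a b, ∀ r ∈ Icc a b, ω t = ω r → γ t = γ r := by
    intro t ht r hr h
    have e1 : s1 * x t = s1 * x r := by rw [recx t ht, recx r hr, h]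
    have e2 : s2 * y t = s2 * y r := by rw [recy t ht, recy r hr, h]
    exact Prod.ext (mul_left_cancel₀ hs1.ne' e1) (mul_left_cancel₀ hs2.ne' e2)
  have hωa : ω a = 0 := by simp [hω]
  have hωb : 0 < ω b := by
    change 0 < ∫ t in a..b, w t
    rw [ew]; positivity
  have haI : a ∈ Ico a b := ⟨le_rfl, hab⟩
  have hb : ∀ t ∈ Ico a b, ω t ≠ ω b := by
    intro t ht h
    have := hγeq t ⟨ht.1, ht.2.le⟩ b ⟨hab.le, le_rfl⟩ h
    have := hinj ht haI (this.trans hcl.symm)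
    rw [this] at h
    linarith
  have ωinj : InjOn ω (Icc a b) := by
    intro t ht r hr h
    rcases ht.2.lt_or_eq with h1 | h1 <;> rcases hr.2.lt_or_eq with h2 | h2
    · exact hinj ⟨ht.1, h1⟩ ⟨hr.1, h2⟩ (hγeq t ht r hr h)
    · exact absurd (h2 ▸ h) (hb t ⟨ht.1, h1⟩)
    · exact absurd (h1 ▸ h.symm) (hb r ⟨hr.1, h2⟩)
    · rw [h1, h2]
  have ωc : ContinuousOn ω (Icc a b) := by
    have := acω.continuousOn
    rwa [uIcc_of_le hab.le] at this
  have ωm := ContinuousOn.strictMonoOn_of_injOn_Icc hab.le (by linarith) ωc ωinj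
  obtain ⟨i1, e1⟩ := int_lin hL hcl l1 l2
  rw [← e1]
  apply intervalIntegral.integral_congr_ae
  filter_upwards [key] with t ht hm
  obtain ⟨hI, d1, d2, d3, d4⟩ := ht (uIoc_subset_uIcc hm)
  obtain ⟨r1, r2⟩ := rel t hI d4
  rw [deriv_pair d1 d2]
  apply alg_eq _ _ _ _ _ _ d4
  have hw0 : 0 ≤ w t := by
    have hN := Icc_mem_nhds hI.1 hI.2
    rw [← (d3.hasDerivWithinAt (s := Icc a b)).derivWithin
      ((uniqueDiffOn_Icc hab) t ⟨hI.1.le, hI.2.le⟩)]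
    exact ωm.monotoneOn.derivWithin_nonneg
  change 0 ≤ l1 * (x t * deriv y t) - l2 * (deriv x t * y t)
  have : (l1 * (x t * deriv y t) - l2 * (deriv x t * y t)) * (s1 * s2)
      = w t * (l1 ^ 2 * x t ^ 2 + l2 ^ 2 * y t ^ 2) := by
    rw [← hs1', ← hs2']
    linear_combination s1 ^ 3 * x t * r2 - s2 ^ 3 * y t * r1
  have h3 : 0 ≤ (l1 * (x t * deriv y t) - l2 * (deriv x t * y t)) * (s1 * s2) := by
    rw [this]; positivity
  exact nonneg_of_mul_nonneg_left h3 (by positivity)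

end

/-- the ellipse `½(λ₁p₁² + λ₂p₂²) = c` through `p₀`, enclosing Euclidean area
`A = 2πc/√(λ₁λ₂)`, minimizes `E_H` among closed curves through `p₀` enclosing area `A`:
every such curve has `E_H ≥ (λ₁+λ₂)A`, and any positively oriented locally Lipschitz
parametrization of the ellipse attains equality. -/
theorem ellipse_isoperimetric (l1 l2 : ℝ) (hl1 : 0 < l1) (hl2 : 0 < l2)
    (p0 : ℝ × ℝ) (hp0 : p0 ≠ (0, 0)) (c A : ℝ)
    (hc : c = (1 / 2) * (l1 * p0.1 ^ 2 + l2 * p0.2 ^ 2))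
    (hA : A = 2 * Real.pi * c / Real.sqrt (l1 * l2)) :
    (∀ a b γ, IsCurve a b γ p0 p0 → sArea a b γ = A →
      (l1 + l2) * A ≤ degLen (FH l1 l2) a b γ) ∧
    (∀ a b γ, IsCurve a b γ p0 p0 → sArea a b γ = A →
      Set.InjOn γ (Set.Ico a b) →
      γ '' Set.Icc a b = { p : ℝ × ℝ | (1 / 2) * (l1 * p.1 ^ 2 + l2 * p.2 ^ 2) = c } →
      degLen (FH l1 l2) a b γ = (l1 + l2) * A) := by
  have hcp : 0 < c := by
    rw [hc]
    by_cases h1 : p0.1 = 0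
    · have h2 : p0.2 ≠ 0 := fun h2 => hp0 (Prod.ext h1 h2)
      positivity
    · positivity
  have hAp : 0 < A := by
    rw [hA]
    have := Real.pi_pos
    positivity
  refine ⟨?_, ?_⟩
  · rintro a b γ ⟨hab, hL, ha, hb⟩ rfl
    exact part_one hab hL (ha.trans hb.symm) l1 l2
  · rintro a b γ ⟨hab, hL, ha, hb⟩ hs hinj him
    have hab' : a < b := by
      rcases hab.lt_or_eq with h | h
      · exact h
      · exfalso
        rw [h] at hs
        simp [sArea] at hs
        linarith
    rw [← hs]
    apply part_two hab' hL (ha.trans hb.symm) hl1 hl2 hcp (hs ▸ hAp) hinj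
    intro t ht
    have : γ t ∈ γ '' Icc a b := mem_image_of_mem _ ht
    rw [him] at this
    have := Set.mem_ofPred_eq ▸ this
    linarith
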